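/- Subcritical phase: if μ₁ > ln 6 (equivalently 6e^{−μ₁} < 1), then for every integer m ≥ 2 the limit p_m := lim_{N→∞, N ≡ m (mod 2)} P_N(m) exists and is strictly positive; these limits satisfy p_{m+2}/p_m = 6 e^{−μ₁} · (1 − 1/(4m²))/(1 − 1/m) for all m ≥ 2, and for each fixed parity class Σ_m p_m = 1 (so the boundary length m(N) stays of order O(1) and has a limiting distribution). -/

import Mathlib

/-!
Fix the parity class of `a ∈ {2, 3}`, and compare each weight `e^{−μ₁ m/2} C₀(N,m)`, with
`m = a + 2k` and `N = a + 2M`, to the weight of `m = a`.  With `j = (N − m)/2`, cancelling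
factorials gives (`C₀_step`)

  `C₀(N, m+2) / C₀(N, m) = 6 (1 − 1/(4m²)) / (1 − 1/m) · g(m, j)`,
  `g(m, j) = (4/3) (2m+3j)(j+1) / ((2m+2j+1)(2m+2j+2))`,

where `0 ≤ g ≤ 1` and `g(m, j) → 1` as `j → ∞`.  Hence the relative weights `relWeight` are bounded
by, and converge as `M → ∞` to, the products `limWeight a k = ∏_{i<k} ratio (a + 2i)`
(`relWeight_le`, `relWeight_tendsto`).  As `ratio m → 6 e^{−μ₁} < 1`, the limits are summable by the
ratio test, so dominated convergence for series shows that the total relative weight `Θ_N / (weight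
of a)` converges to `∑ limWeight a k` (`tendsto_partition`).  Thus `p_{a+2k}` is `limWeight a k`
normalised by this sum, and the assertions are read off from the product formula.
-/

open Finset

/-- `C₀ N m` is the number of rooted triangulations of the disk with `N` triangles and
`m` boundary edges: for `m ≥ 2`, `N ≥ m`, `N ≡ m (mod 2)` and `j = (N−m)/2` it equals
`2^{j+2}·(2m+3j−1)!·(2m−3)! / ((j+1)!·(2m+2j)!·((m−2)!)²)`, and `0` otherwise. -/
noncomputable def C₀ (N m : ℕ) : ℝ :=
  if 2 ≤ m ∧ m ≤ N ∧ N % 2 = m % 2 then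
    (2 : ℝ) ^ ((N - m) / 2 + 2) *
      (Nat.factorial (2 * m + 3 * ((N - m) / 2) - 1) : ℝ) *
      (Nat.factorial (2 * m - 3) : ℝ) /
      ((Nat.factorial ((N - m) / 2 + 1) : ℝ) *
        (Nat.factorial (2 * m + 2 * ((N - m) / 2)) : ℝ) *
        (Nat.factorial (m - 2) : ℝ) ^ 2)
  else 0

/-- The partition function `Θ_N(μ₁) = Σ_m e^{−μ₁ m/2} C₀(N,m)`. -/
noncomputable def Θ (μ₁ : ℝ) (N : ℕ) : ℝ :=
  ∑ m ∈ Finset.range (N + 1), Real.exp (-μ₁ * m / 2) * C₀ N m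

/-- The boundary-length distribution `P_N(m) = e^{−μ₁ m/2} C₀(N,m) / Θ_N(μ₁)`. -/
noncomputable def P (μ₁ : ℝ) (N m : ℕ) : ℝ :=
  Real.exp (-μ₁ * m / 2) * C₀ N m / Θ μ₁ N

open Filter

/-- The limiting ratio `p_{m+2} / p_m`. -/
noncomputable def ratio (μ₁ : ℝ) (m : ℕ) : ℝ :=
  6 * Real.exp (-μ₁) * ((1 - 1 / (4 * (m : ℝ) ^ 2)) / (1 - 1 / (m : ℝ)))

/-- The finite-size correction to the limiting ratio, with `j = (N - m) / 2`. -/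
noncomputable def corr (m j : ℕ) : ℝ :=
  4 / 3 * ((2 * m + 3 * j) * (j + 1)) / ((2 * m + 2 * j + 1) * (2 * m + 2 * j + 2))

/-- The unnormalised weight of boundary length `m`. -/
noncomputable def weight (μ₁ : ℝ) (N m : ℕ) : ℝ := Real.exp (-μ₁ * m / 2) * C₀ N m

/-- The weight of `a + 2k` relative to that of `a`, for `N = a + 2M`. -/
noncomputable def relWeight (μ₁ : ℝ) (a M k : ℕ) : ℝ :=
  weight μ₁ (a + 2 * M) (a + 2 * k) / weight μ₁ (a + 2 * M) a

/-- The limit of `relWeight μ₁ a M k` as `M → ∞`. -/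
noncomputable def limWeight (μ₁ : ℝ) (a k : ℕ) : ℝ := ∏ i ∈ range k, ratio μ₁ (a + 2 * i)

/-! ### The one-step recurrence for `C₀` -/

lemma C₀_eq (s j : ℕ) : C₀ (s + 2 + 2 * j) (s + 2) =
    (2 : ℝ) ^ (j + 2) * (Nat.factorial (2 * s + 3 * j + 3) : ℝ) * (Nat.factorial (2 * s + 1) : ℝ) /
      ((Nat.factorial (j + 1) : ℝ) * (Nat.factorial (2 * s + 2 * j + 4) : ℝ) *
        (Nat.factorial s : ℝ) ^ 2) := by
  have hj : (s + 2 + 2 * j - (s + 2)) / 2 = j := by omega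
  rw [C₀, if_pos (by omega), hj, show 2 * (s + 2) + 3 * j - 1 = 2 * s + 3 * j + 3 by omega,
    show 2 * (s + 2) - 3 = 2 * s + 1 by omega,
    show 2 * (s + 2) + 2 * j = 2 * s + 2 * j + 4 by omega, Nat.add_sub_cancel]

lemma C₀_pos {m : ℕ} (hm : 2 ≤ m) (j : ℕ) : 0 < C₀ (m + 2 * j) m := by
  obtain ⟨s, rfl⟩ := Nat.exists_eq_add_of_le' hm
  rw [C₀_eq]
  positivity

lemma C₀_nonneg (N m : ℕ) : 0 ≤ C₀ N m := by
  unfold C₀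
  split_ifs <;> positivity

lemma C₀_step {m : ℕ} (hm : 2 ≤ m) (j : ℕ) :
    C₀ (m + 2 * (j + 1)) (m + 2) = C₀ (m + 2 * (j + 1)) m *
      (6 * ((1 - 1 / (4 * (m : ℝ) ^ 2)) / (1 - 1 / (m : ℝ))) * corr m (j + 1)) := by
  obtain ⟨s, rfl⟩ := Nat.exists_eq_add_of_le' hm
  have h := C₀_eq (s + 2) j
  rw [show s + 2 + 2 + 2 * j = s + 2 + 2 * (j + 1) by ring] at h
  rw [h, C₀_eq, corr,
    show 2 * (s + 2) + 3 * j + 3 = 2 * s + 3 * j + 6 + 1 by ring,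
    show 2 * s + 3 * (j + 1) + 3 = 2 * s + 3 * j + 6 by ring,
    show 2 * (s + 2) + 1 = 2 * s + 1 + 1 + 1 + 1 + 1 by ring,
    show 2 * (s + 2) + 2 * j + 4 = 2 * s + 2 * (j + 1) + 4 + 1 + 1 by ring]
  simp only [Nat.factorial_succ (2 * s + 3 * j + 6), Nat.factorial_succ (2 * s + 1 + 1 + 1 + 1),
    Nat.factorial_succ (2 * s + 1 + 1 + 1), Nat.factorial_succ (2 * s + 1 + 1),
    Nat.factorial_succ (2 * s + 1), Nat.factorial_succ (2 * s + 2 * (j + 1) + 4 + 1),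
    Nat.factorial_succ (2 * s + 2 * (j + 1) + 4), Nat.factorial_succ (j + 1),
    Nat.factorial_succ (s + 1), Nat.factorial_succ s]
  have e : (1 - 1 / (4 * ((s + 2 : ℕ) : ℝ) ^ 2)) / (1 - 1 / ((s + 2 : ℕ) : ℝ)) =
      (2 * s + 3) * (2 * s + 5) / (4 * (s + 1) * (s + 2)) := by
    have h1 : (1 - 1 / ((s + 2 : ℕ) : ℝ)) = (s + 1) / (s + 2) := by
      push_cast
      field_simp
      ring
    rw [h1]
    push_cast
    field_simp
    ring
  rw [e]
  have p1 : (0 : ℝ) < (Nat.factorial (2 * s + 2 * (j + 1) + 4) : ℝ) := by positivity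
  have p2 : (0 : ℝ) < (Nat.factorial (j + 1) : ℝ) := by positivity
  have p3 : (0 : ℝ) < (Nat.factorial s : ℝ) := by positivity
  generalize (Nat.factorial (2 * s + 2 * (j + 1) + 4)) = A at *
  generalize (Nat.factorial (j + 1)) = B at *
  generalize (Nat.factorial s) = D at *
  push_cast
  field_simp
  ring

/-! ### The correction factor and the limiting ratio -/

lemma corr_nonneg (m j : ℕ) : 0 ≤ corr m j := by
  unfold corr
  positivity

lemma corr_le_one (m j : ℕ) : corr m j ≤ 1 := by
  unfold corr
  rw [div_le_one (by positivity)]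
  have hm : (0 : ℝ) ≤ m := by positivity
  have hj : (0 : ℝ) ≤ j := by positivity
  nlinarith [mul_nonneg hm hj, sq_nonneg (m : ℝ)]

lemma corr_tendsto (m : ℕ) : Tendsto (fun j => corr m j) atTop (nhds 1) := by
  have hc (c : ℝ) : Tendsto (fun j : ℕ => c / (j : ℝ)) atTop (nhds 0) :=
    tendsto_const_div_atTop_nhds_zero_nat c
  have h := ((((hc (2 * m)).add_const 3).mul ((hc 1).const_add 1)).const_mul (4 / 3)).div
    (((hc (2 * m + 1)).add_const 2).mul ((hc (2 * m + 2)).add_const 2)) (by norm_num)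
  have h1 : (4 / 3 * ((0 + 3) * (1 + 0)) / ((0 + 2) * (0 + 2)) : ℝ) = 1 := by norm_num
  rw [h1] at h
  refine h.congr' ?_
  filter_upwards [eventually_gt_atTop 0] with j hj
  have hj' : (0 : ℝ) < j := by exact_mod_cast hj
  simp only [corr, Pi.div_apply]
  field_simp
  ring

lemma ratio_pos (μ₁ : ℝ) {m : ℕ} (hm : 2 ≤ m) : 0 < ratio μ₁ m := by
  have h : (2 : ℝ) ≤ m := by exact_mod_cast hm
  have h1 : 1 / (m : ℝ) < 1 := by rw [div_lt_one (by linarith)]; linarith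
  have h2 : 1 / (4 * (m : ℝ) ^ 2) < 1 := by rw [div_lt_one (by positivity)]; nlinarith
  unfold ratio
  have := Real.exp_pos (-μ₁)
  have := div_pos (sub_pos.2 h2) (sub_pos.2 h1)
  positivity

lemma ratio_tendsto (μ₁ : ℝ) :
    Tendsto (fun m : ℕ => ratio μ₁ m) atTop (nhds (6 * Real.exp (-μ₁))) := by
  have h1 : Tendsto (fun m : ℕ => 1 / (m : ℝ)) atTop (nhds 0) :=
    tendsto_const_div_atTop_nhds_zero_nat 1
  have h := (((h1.pow 2).const_mul (1 / 4)).const_sub 1).div (h1.const_sub 1) (by norm_num)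
  have h := h.const_mul (6 * Real.exp (-μ₁))
  norm_num at h
  refine h.congr fun m => ?_
  simp only [ratio]
  congr 3
  · ring
  · ring

/-! ### Relative weights: domination and pointwise limit -/

lemma weight_pos (μ₁ : ℝ) {a : ℕ} (ha : 2 ≤ a) (M : ℕ) : 0 < weight μ₁ (a + 2 * M) a :=
  mul_pos (Real.exp_pos _) (C₀_pos ha M)

lemma relWeight_nonneg (μ₁ : ℝ) (a M k : ℕ) : 0 ≤ relWeight μ₁ a M k :=
  div_nonneg (mul_nonneg (Real.exp_pos _).le (C₀_nonneg _ _))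
    (mul_nonneg (Real.exp_pos _).le (C₀_nonneg _ _))

lemma relWeight_zero (μ₁ : ℝ) {a : ℕ} (ha : 2 ≤ a) (M : ℕ) : relWeight μ₁ a M 0 = 1 :=
  div_self (weight_pos μ₁ ha M).ne'

lemma weight_eq_zero (μ₁ : ℝ) (a : ℕ) {M k : ℕ} (h : M < k) :
    weight μ₁ (a + 2 * M) (a + 2 * k) = 0 := by
  rw [weight, C₀, if_neg (by omega), mul_zero]

lemma relWeight_succ (μ₁ : ℝ) {a : ℕ} (ha : 2 ≤ a) {M k : ℕ} (h : k < M) :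
    relWeight μ₁ a M (k + 1) =
      relWeight μ₁ a M k * (ratio μ₁ (a + 2 * k) * corr (a + 2 * k) (M - k)) := by
  obtain ⟨j, rfl⟩ := Nat.exists_eq_add_of_lt h
  have h0 := C₀_step (m := a + 2 * k) (by omega) j
  rw [show a + 2 * k + 2 * (j + 1) = a + 2 * (k + j + 1) by ring,
    show a + 2 * k + 2 = a + 2 * (k + 1) by ring] at h0
  have h1 : Real.exp (-μ₁ * ((a + 2 * (k + 1) : ℕ) : ℝ) / 2) =
      Real.exp (-μ₁ * ((a + 2 * k : ℕ) : ℝ) / 2) * Real.exp (-μ₁) := by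
    rw [← Real.exp_add]
    congr 1
    push_cast
    ring
  rw [relWeight, relWeight, weight, h0, h1, weight, weight, ratio, show k + j + 1 - k = j + 1 by omega]
  ring

lemma limWeight_pos (μ₁ : ℝ) {a : ℕ} (ha : 2 ≤ a) (k : ℕ) : 0 < limWeight μ₁ a k :=
  Finset.prod_pos fun _ _ => ratio_pos μ₁ (by omega)

lemma limWeight_succ (μ₁ : ℝ) (a k : ℕ) :
    limWeight μ₁ a (k + 1) = limWeight μ₁ a k * ratio μ₁ (a + 2 * k) :=
  Finset.prod_range_succ _ _

lemma relWeight_le (μ₁ : ℝ) {a : ℕ} (ha : 2 ≤ a) (M k : ℕ) :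
    relWeight μ₁ a M k ≤ limWeight μ₁ a k := by
  induction k with
  | zero => simp [relWeight_zero μ₁ ha, limWeight]
  | succ k ih =>
    rcases lt_or_ge k M with h | h
    · rw [relWeight_succ μ₁ ha h, limWeight_succ]
      have hr := ratio_pos μ₁ (m := a + 2 * k) (by omega)
      exact mul_le_mul ih (mul_le_of_le_one_right hr.le (corr_le_one _ _))
        (mul_nonneg hr.le (corr_nonneg _ _)) (limWeight_pos μ₁ ha k).le
    · rw [relWeight, weight_eq_zero μ₁ a (by omega), zero_div]
      exact (limWeight_pos μ₁ ha _).le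

lemma relWeight_tendsto (μ₁ : ℝ) {a : ℕ} (ha : 2 ≤ a) (k : ℕ) :
    Tendsto (fun M => relWeight μ₁ a M k) atTop (nhds (limWeight μ₁ a k)) := by
  induction k with
  | zero => simp [relWeight_zero μ₁ ha, limWeight]
  | succ k ih =>
    have hc := (corr_tendsto (a + 2 * k)).comp (tendsto_sub_atTop_nat k)
    have h := ih.mul (hc.const_mul (ratio μ₁ (a + 2 * k)))
    rw [mul_one, ← limWeight_succ] at h
    refine h.congr' ?_
    filter_upwards [eventually_gt_atTop k] with M hM
    exact (relWeight_succ μ₁ ha hM).symm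

lemma limWeight_summable {μ₁ : ℝ} (hμ : Real.log 6 < μ₁) {a : ℕ} (ha : 2 ≤ a) :
    Summable (limWeight μ₁ a) := by
  have hlt : 6 * Real.exp (-μ₁) < 1 := by
    rw [Real.exp_neg, ← div_eq_mul_inv, div_lt_one (Real.exp_pos _)]
    exact (Real.log_lt_iff_lt_exp (by norm_num)).1 hμ
  refine summable_of_ratio_test_tendsto_lt_one hlt
    (Eventually.of_forall fun k => (limWeight_pos μ₁ ha k).ne') ?_
  have ht : Tendsto (fun k : ℕ => a + 2 * k) atTop atTop :=
    tendsto_atTop_mono (fun k => show k ≤ a + 2 * k by omega) tendsto_id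
  refine ((ratio_tendsto μ₁).comp ht).congr fun k => ?_
  have hp := limWeight_pos μ₁ ha k
  have hr := ratio_pos μ₁ (m := a + 2 * k) (by omega)
  rw [limWeight_succ, Real.norm_of_nonneg (by positivity), Real.norm_of_nonneg hp.le,
    mul_div_cancel_left₀ _ hp.ne']
  rfl

/-! ### Convergence of the partition function -/

/-- Only `m = a + 2k` contribute to `Θ_N` for `N = a + 2M`; this uses that `a` is the
smallest admissible boundary length in its parity class. -/
lemma Θ_eq (μ₁ : ℝ) {a : ℕ} (ha : 2 ≤ a) (ha' : a ≤ 3) (M : ℕ) :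
    Θ μ₁ (a + 2 * M) = weight μ₁ (a + 2 * M) a * ∑' k, relWeight μ₁ a M k := by
  rw [← tsum_mul_left]
  have h0 (k : ℕ) : weight μ₁ (a + 2 * M) a * relWeight μ₁ a M k =
      weight μ₁ (a + 2 * M) (a + 2 * k) := mul_div_cancel₀ _ (weight_pos μ₁ ha M).ne'
  simp_rw [h0]
  rw [tsum_eq_sum (s := range (M + 1)) fun k hk => weight_eq_zero μ₁ a (by
    simpa [Nat.lt_succ_iff] using hk)]
  have hinj : Set.InjOn (fun k => a + 2 * k) (range (M + 1) : Set ℕ) := by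
    intro x _ y _ h
    simp only at h
    omega
  rw [← Finset.sum_image (f := weight μ₁ (a + 2 * M)) hinj]
  symm
  refine Finset.sum_subset ?_ ?_
  · intro x hx
    simp only [Finset.mem_image, Finset.mem_range] at hx ⊢
    omega
  · intro x hx hx'
    simp only [Finset.mem_image, Finset.mem_range, not_exists, not_and] at hx hx'
    rw [weight, C₀, if_neg, mul_zero]
    rintro ⟨h1, h2, h3⟩
    exact hx' ((x - a) / 2) (by omega) (by omega)

lemma tendsto_partition {μ₁ : ℝ} (hμ : Real.log 6 < μ₁) {a : ℕ} (ha : 2 ≤ a) :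
    Tendsto (fun M => ∑' k, relWeight μ₁ a M k) atTop (nhds (∑' k, limWeight μ₁ a k)) :=
  tendsto_tsum_of_dominated_convergence (limWeight_summable hμ ha)
    (fun k => relWeight_tendsto μ₁ ha k)
    (Eventually.of_forall fun M k => by
      rw [Real.norm_of_nonneg (relWeight_nonneg _ _ _ _)]
      exact relWeight_le μ₁ ha M k)

lemma limWeight_tsum_pos {μ₁ : ℝ} (hμ : Real.log 6 < μ₁) {a : ℕ} (ha : 2 ≤ a) :
    0 < ∑' k, limWeight μ₁ a k :=
  (limWeight_summable hμ ha).tsum_pos (fun k => (limWeight_pos μ₁ ha k).le) 0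
    (limWeight_pos μ₁ ha 0)

lemma tendsto_P {μ₁ : ℝ} (hμ : Real.log 6 < μ₁) {a : ℕ} (ha : 2 ≤ a) (ha' : a ≤ 3) (k : ℕ) :
    Tendsto (fun M => P μ₁ (a + 2 * M) (a + 2 * k)) atTop
      (nhds (limWeight μ₁ a k / ∑' i, limWeight μ₁ a i)) := by
  refine ((relWeight_tendsto μ₁ ha k).div (tendsto_partition hμ ha)
    (limWeight_tsum_pos hμ ha).ne').congr fun M => ?_
  simp only [Pi.div_apply]
  rw [P, Θ_eq μ₁ ha ha', ← div_div]
  rfl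

/-! ### The limiting law -/

/-- The limiting law: a boundary length `m ≥ 2` is written as `a + 2k` with `a ∈ {2, 3}`,
that is `a = 2 + m % 2` and `k = (m - 2) / 2`. -/
noncomputable def limLaw (μ₁ : ℝ) (m : ℕ) : ℝ :=
  limWeight μ₁ (2 + m % 2) ((m - 2) / 2) / ∑' i, limWeight μ₁ (2 + m % 2) i

lemma limLaw_eq (μ₁ : ℝ) {a : ℕ} (ha : 2 ≤ a) (ha' : a ≤ 3) (k : ℕ) :
    limLaw μ₁ (a + 2 * k) = limWeight μ₁ a k / ∑' i, limWeight μ₁ a i := by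
  rw [limLaw, show 2 + (a + 2 * k) % 2 = a by omega, show (a + 2 * k - 2) / 2 = k by omega]

lemma limLaw_tsum {μ₁ : ℝ} (hμ : Real.log 6 < μ₁) {a : ℕ} (ha : 2 ≤ a) (ha' : a ≤ 3) :
    ∑' n : ℕ, limLaw μ₁ (a + 2 * n) = 1 := by
  simp_rw [limLaw_eq μ₁ ha ha', tsum_div_const]
  exact div_self (limWeight_tsum_pos hμ ha).ne'

lemma exists_eq_parity {m : ℕ} (hm : 2 ≤ m) : ∃ a k, 2 ≤ a ∧ a ≤ 3 ∧ m = a + 2 * k :=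
  ⟨2 + m % 2, (m - 2) / 2, by omega, by omega, by omega⟩

/-- Subcritical phase `μ₁ > ln 6`: for every `m ≥ 2` the limit
`p_m = lim_{N→∞, N≡m (mod 2)} P_N(m)` exists and is strictly positive, the limits satisfy
`p_{m+2}/p_m = 6e^{−μ₁}(1−1/(4m²))/(1−1/m)`, and in each parity class `Σ_m p_m = 1`. -/
theorem subcritical_phase (μ₁ : ℝ) (hμ : Real.log 6 < μ₁) :
    ∃ p : ℕ → ℝ,
      (∀ m : ℕ, 2 ≤ m →
        Tendsto (fun n : ℕ => P μ₁ (m + 2 * n) m) atTop (nhds (p m)) ∧ 0 < p m) ∧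
      (∀ m : ℕ, 2 ≤ m →
        p (m + 2) / p m =
          6 * Real.exp (-μ₁) * ((1 - 1 / (4 * (m : ℝ) ^ 2)) / (1 - 1 / (m : ℝ)))) ∧
      (∑' n : ℕ, p (2 + 2 * n)) = 1 ∧ (∑' n : ℕ, p (3 + 2 * n)) = 1 := by
  refine ⟨limLaw μ₁, fun m hm => ?_, fun m hm => ?_, limLaw_tsum hμ le_rfl (by norm_num),
    limLaw_tsum hμ (by norm_num) le_rfl⟩
  · obtain ⟨a, k, ha, ha', rfl⟩ := exists_eq_parity hm
    rw [limLaw_eq μ₁ ha ha']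
    refine ⟨?_, div_pos (limWeight_pos μ₁ ha k) (limWeight_tsum_pos hμ ha)⟩
    refine ((tendsto_P hμ ha ha' k).comp (tendsto_add_atTop_nat k)).congr fun n => ?_
    simp only [Function.comp_apply]
    rw [show a + 2 * (n + k) = a + 2 * k + 2 * n by ring]
  · obtain ⟨a, k, ha, ha', rfl⟩ := exists_eq_parity hm
    rw [show a + 2 * k + 2 = a + 2 * (k + 1) by ring, limLaw_eq μ₁ ha ha', limLaw_eq μ₁ ha ha',
      limWeight_succ, div_div_div_cancel_right₀ (limWeight_tsum_pos hμ ha).ne',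
      mul_div_cancel_left₀ _ (limWeight_pos μ₁ ha k).ne']
    rfl
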